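/- Let T be a torsion class in mod Λ and M an indecomposable module not in T such that every proper factor of M belongs to T, and set T' = Filt(T ∪ {M}). Then T' covers T in tors Λ if and only if M is a factor module of every module N ∈ T' \ T. -/

import Mathlib

/-!
Common definitions: the category `mod Λ` of finite(-dimensional) left `Λ`-modules,
torsion(-free) classes, filtration closures, bricks, minimal (co-)extending modules,
and the lattice-theoretic notions for `tors Λ` (ordered by containment).
-/

/-- A bundled (left) `Λ`-module with carrier in `Type`. -/
structure Mdl (Λ : Type) [Ring Λ] : Type 1 where
  carrier : Type
  [isAddCommGroup : AddCommGroup carrier]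
  [isModule : Module Λ carrier]

attribute [instance] Mdl.isAddCommGroup Mdl.isModule

instance {Λ : Type} [Ring Λ] : CoeSort (Mdl Λ) Type :=
  ⟨Mdl.carrier⟩

variable (Λ : Type) [Ring Λ]

/-- Bundle a module. -/
def Mdl.of (X : Type) [AddCommGroup X] [Module Λ X] : Mdl Λ :=
  { carrier := X }

/-- `M` and `N` are isomorphic `Λ`-modules. -/
def MIso (M N : Mdl Λ) : Prop :=
  Nonempty (M.carrier ≃ₗ[Λ] N.carrier)

/-- `N` is a factor (quotient) module of `M`. -/
def IsFactor (M N : Mdl Λ) : Prop :=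
  ∃ f : M.carrier →ₗ[Λ] N.carrier, Function.Surjective f

/-- `N` is a proper factor of `M` (a quotient by a nonzero submodule). -/
def IsProperFactor (M N : Mdl Λ) : Prop :=
  ∃ f : M.carrier →ₗ[Λ] N.carrier, Function.Surjective f ∧ ¬ Function.Injective f

/-- `N` is (isomorphic to) a submodule of `M`. -/
def IsSubmoduleOf (N M : Mdl Λ) : Prop :=
  ∃ f : N.carrier →ₗ[Λ] M.carrier, Function.Injective f

/-- `N` is (isomorphic to) a proper submodule of `M`. -/
def IsProperSubmoduleOf (N M : Mdl Λ) : Prop :=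
  ∃ f : N.carrier →ₗ[Λ] M.carrier, Function.Injective f ∧ ¬ Function.Surjective f

/-- `D` is (isomorphic to) a direct summand of `N`. -/
def IsSummand (D N : Mdl Λ) : Prop :=
  ∃ (i : D.carrier →ₗ[Λ] N.carrier) (p : N.carrier →ₗ[Λ] D.carrier),
    p.comp i = LinearMap.id

/-- `0 → A --f--> M --g--> B → 0` is a short exact sequence. -/
def IsSES {A M B : Mdl Λ} (f : A.carrier →ₗ[Λ] M.carrier)
    (g : M.carrier →ₗ[Λ] B.carrier) : Prop :=
  Function.Injective f ∧ Function.Surjective g ∧ LinearMap.range f = LinearMap.ker g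

/-- The short exact sequence `0 → A --f--> M --g--> B → 0` splits. -/
def SplitsSES {A M B : Mdl Λ} (_f : A.carrier →ₗ[Λ] M.carrier)
    (g : M.carrier →ₗ[Λ] B.carrier) : Prop :=
  ∃ s : B.carrier →ₗ[Λ] M.carrier, g.comp s = LinearMap.id

/-- `M` is an extension of `B` by `A`, i.e. there is a s.e.s. `0 → A → M → B → 0`. -/
def ExtOf (M A B : Mdl Λ) : Prop :=
  ∃ (f : A.carrier →ₗ[Λ] M.carrier) (g : M.carrier →ₗ[Λ] B.carrier), IsSES Λ f g

/-- A torsion class in `mod Λ`: a class of finite(-dimensional) modules containing `0`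
and closed under isomorphisms, factor modules and extensions. -/
structure IsTorsionClass (T : Set (Mdl Λ)) : Prop where
  fin : ∀ M ∈ T, Module.Finite Λ M.carrier
  zero_mem : ∀ M : Mdl Λ, Subsingleton M.carrier → M ∈ T
  iso_closed : ∀ M ∈ T, ∀ N : Mdl Λ, MIso Λ M N → N ∈ T
  factor_closed : ∀ M ∈ T, ∀ N : Mdl Λ, IsFactor Λ M N → N ∈ T
  ext_closed : ∀ A ∈ T, ∀ B ∈ T, ∀ M : Mdl Λ, ExtOf Λ M A B → M ∈ T

/-- A torsion-free class in `mod Λ`: a class of finite(-dimensional) modules containing `0`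
and closed under isomorphisms, submodules and extensions. -/
structure IsTorsionFreeClass (F : Set (Mdl Λ)) : Prop where
  fin : ∀ M ∈ F, Module.Finite Λ M.carrier
  zero_mem : ∀ M : Mdl Λ, Subsingleton M.carrier → M ∈ F
  iso_closed : ∀ M ∈ F, ∀ N : Mdl Λ, MIso Λ M N → N ∈ F
  sub_closed : ∀ M ∈ F, ∀ N : Mdl Λ, IsSubmoduleOf Λ N M → N ∈ F
  ext_closed : ∀ A ∈ F, ∀ B ∈ F, ∀ M : Mdl Λ, ExtOf Λ M A B → M ∈ F

/-- `Filt S M`: `M` admits a filtration `0 = M₀ ⊆ M₁ ⊆ ⋯ ⊆ M_l = M` whose successive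
quotients are isomorphic to modules in `S`. -/
inductive Filt (S : Set (Mdl Λ)) : Mdl Λ → Prop
  | of_subsingleton (M : Mdl Λ) (h : Subsingleton M.carrier) : Filt S M
  | step (M : Mdl Λ) (N : Submodule Λ M.carrier) (X : Mdl Λ) (hX : X ∈ S)
      (hN : Filt S (Mdl.of Λ N)) (e : Nonempty ((M.carrier ⧸ N) ≃ₗ[Λ] X.carrier)) :
      Filt S M

/-- The filtration closure `Filt(S)` as a set of modules. -/
def FiltSet (S : Set (Mdl Λ)) : Set (Mdl Λ) := {M | Filt Λ S M}

/-- `Gen(M)`: the class of factor modules of finite direct sums of copies of `M`. -/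
def GenSet (M : Mdl Λ) : Set (Mdl Λ) :=
  {N | ∃ (n : ℕ) (f : (Fin n → M.carrier) →ₗ[Λ] N.carrier), Function.Surjective f}

/-- `T^⊥ = {X ∈ mod Λ : Hom_Λ(N, X) = 0 for all N ∈ T}`. -/
def Perp (T : Set (Mdl Λ)) : Set (Mdl Λ) :=
  {X | Module.Finite Λ X.carrier ∧ ∀ N ∈ T, ∀ f : N.carrier →ₗ[Λ] X.carrier, f = 0}

/-- A brick: a module (in `mod Λ`) whose endomorphism ring is a division ring,
i.e. it is nonzero and every nonzero endomorphism is invertible. -/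
def IsBrick (M : Mdl Λ) : Prop :=
  Module.Finite Λ M.carrier ∧ Nontrivial M.carrier ∧
    ∀ f : M.carrier →ₗ[Λ] M.carrier, f ≠ 0 → Function.Bijective f

/-- An indecomposable module: nonzero, and not the direct sum of two nonzero submodules. -/
def Indec (M : Mdl Λ) : Prop :=
  Nontrivial M.carrier ∧
    ∀ p q : Submodule Λ M.carrier, IsCompl p q → p = ⊥ ∨ q = ⊥

/-- `M` is a minimal extending module for the torsion class `T`:
(P1) every proper factor of `M` is in `T`;
(P2) if `0 → M → X → N → 0` is non-split exact with `N ∈ T`, then `X ∈ T`;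
(P3) `Hom_Λ(T, M) = 0`. -/
structure IsMinExt (T : Set (Mdl Λ)) (M : Mdl Λ) : Prop where
  fin : Module.Finite Λ M.carrier
  p1 : ∀ N : Mdl Λ, IsProperFactor Λ M N → N ∈ T
  p2 : ∀ (X N : Mdl Λ) (f : M.carrier →ₗ[Λ] X.carrier) (g : X.carrier →ₗ[Λ] N.carrier),
      IsSES Λ f g → ¬ SplitsSES Λ f g → N ∈ T → X ∈ T
  p3 : ∀ N ∈ T, ∀ f : N.carrier →ₗ[Λ] M.carrier, f = 0

/-- `M` is a minimal co-extending module for the torsion-free class `F`: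
(P1') every proper submodule of `M` is in `F`;
(P2') if `0 → F' → X → M → 0` is non-split exact with `F' ∈ F`, then `X ∈ F`;
(P3') `Hom_Λ(M, F) = 0`. -/
structure IsMinCoExt (F : Set (Mdl Λ)) (M : Mdl Λ) : Prop where
  fin : Module.Finite Λ M.carrier
  p1 : ∀ N : Mdl Λ, IsProperSubmoduleOf Λ N M → N ∈ F
  p2 : ∀ (X F' : Mdl Λ) (f : F'.carrier →ₗ[Λ] X.carrier) (g : X.carrier →ₗ[Λ] M.carrier),
      IsSES Λ f g → ¬ SplitsSES Λ f g → F' ∈ F → X ∈ F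
  p3 : ∀ F' ∈ F, ∀ f : M.carrier →ₗ[Λ] F'.carrier, f = 0

/-- `T'` covers `T` in the lattice `tors Λ` of torsion classes ordered by containment. -/
def TorsCovers (T' T : Set (Mdl Λ)) : Prop :=
  IsTorsionClass Λ T' ∧ IsTorsionClass Λ T ∧ T ⊂ T' ∧
    ∀ Y : Set (Mdl Λ), IsTorsionClass Λ Y → T ⊂ Y → Y ⊆ T' → Y = T'

/-- `F'` covers `F` in the lattice `torf Λ` of torsion-free classes ordered by containment. -/
def TorfCovers (F' F : Set (Mdl Λ)) : Prop :=
  IsTorsionFreeClass Λ F' ∧ IsTorsionFreeClass Λ F ∧ F ⊂ F' ∧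
    ∀ Y : Set (Mdl Λ), IsTorsionFreeClass Λ Y → F ⊂ Y → Y ⊆ F' → Y = F'

/-- The join `⋁ A` of a family of torsion classes in `tors Λ`: the smallest torsion
class containing all members of `A`. -/
def TorsJoin (A : Set (Set (Mdl Λ))) : Set (Mdl Λ) :=
  ⋂₀ {T : Set (Mdl Λ) | IsTorsionClass Λ T ∧ ∀ S ∈ A, S ⊆ T}

/-- A completely join-irreducible element of `tors Λ`: a torsion class `T` such that
`T ∈ A` whenever `A` is a set of torsion classes with `⋁ A = T`. -/
def CompletelyJoinIrred (T : Set (Mdl Λ)) : Prop :=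
  IsTorsionClass Λ T ∧
    ∀ A : Set (Set (Mdl Λ)), (∀ S ∈ A, IsTorsionClass Λ S) → TorsJoin Λ A = T → T ∈ A

/-- The join representation `⋁ A` is irredundant in `tors Λ`:
every proper subset has strictly smaller join. -/
def TorsIrredundant (A : Set (Set (Mdl Λ))) : Prop :=
  ∀ B : Set (Set (Mdl Λ)), B ⊂ A → TorsJoin Λ B ⊂ TorsJoin Λ A

/-- `A` is the canonical join representation of its join in `tors Λ` (equivalently, a face
of the canonical join complex `Γ(tors Λ)`): `⋁ A` is irredundant, and `A ≪ B` for every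
irredundant join representation `⋁ B` of the same element. -/
def TorsCJR (A : Set (Set (Mdl Λ))) : Prop :=
  (∀ S ∈ A, IsTorsionClass Λ S) ∧ TorsIrredundant Λ A ∧
    ∀ B : Set (Set (Mdl Λ)), (∀ S ∈ B, IsTorsionClass Λ S) →
      TorsJoin Λ B = TorsJoin Λ A → TorsIrredundant Λ B → ∀ a ∈ A, ∃ b ∈ B, a ⊆ b

/-- `M` and `N` are hom-orthogonal: `Hom_Λ(M, N) = 0` and `Hom_Λ(N, M) = 0`. -/
def HomOrthogonal (M N : Mdl Λ) : Prop :=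
  (∀ f : M.carrier →ₗ[Λ] N.carrier, f = 0) ∧ ∀ f : N.carrier →ₗ[Λ] M.carrier, f = 0

/-!
Since `T` is a torsion class containing every proper factor of `M` but not `M` itself,
`Hom(T, M) = 0`: the image `I` of a nonzero map would exhibit `M` as an extension of `M / I ∈ T`
by `I ∈ T`. A noninjective endomorphism of `M` has its image in `T`, hence is zero, and an injective
one is surjective because `M` has finite length. Thus every map from a module in `T ∪ {M}` to `M`
is zero or surjective, and this dichotomy passes to `T' = Filt(T ∪ {M})` along filtrations. So the
modules in `T'` that do not have `M` as a factor are exactly those without nonzero maps to `M`; they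
form a torsion class containing `T` but not `M`, which must be `T` if `T'` covers `T`. Conversely,
if `M` is a factor of every module in `T' \ T`, then a torsion class between `T` and `T'` other than
`T` contains `M`, hence all of `T'`.
-/

section

variable {Λ}

theorem exists_comp_mkQ_eq_of_comp_subtype_eq_zero {R X M : Type*} [Ring R] [AddCommGroup X]
    [AddCommGroup M] [Module R X] [Module R M] {N : Submodule R X} {f : X →ₗ[R] M}
    (hf : f.comp N.subtype = 0) : ∃ g : X ⧸ N →ₗ[R] M, g.comp N.mkQ = f :=
  ⟨N.liftQ f fun x hx => LinearMap.congr_fun hf ⟨x, hx⟩, N.liftQ_mkQ f _⟩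

theorem MIso.isFactor {X Y : Mdl Λ} : MIso Λ X Y → IsFactor Λ X Y :=
  fun ⟨e⟩ => ⟨e, e.surjective⟩

theorem extOf_iff_exists_submodule {X A B : Mdl Λ} :
    ExtOf Λ X A B ↔ ∃ N : Submodule Λ X.carrier,
      MIso Λ A (Mdl.of Λ N) ∧ MIso Λ B (Mdl.of Λ (X.carrier ⧸ N)) := by
  constructor
  · rintro ⟨f, g, hf, hg, hfg⟩
    have hexact : Function.Exact f g := LinearMap.exact_iff.mpr hfg.symm
    exact ⟨LinearMap.range f, ⟨LinearEquiv.ofInjective f hf⟩,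
      ⟨(hexact.linearEquivOfSurjective hg).symm⟩⟩
  · rintro ⟨N, ⟨a⟩, ⟨b⟩⟩
    refine ⟨N.subtype.comp a.toLinearMap, b.symm.toLinearMap.comp N.mkQ,
      N.injective_subtype.comp a.injective, b.symm.surjective.comp N.mkQ_surjective, ?_⟩
    calc LinearMap.range (N.subtype.comp a.toLinearMap)
        = N := (LinearEquiv.range_comp a N.subtype).trans N.range_subtype
      _ = LinearMap.ker (b.symm.toLinearMap.comp N.mkQ) :=
        ((LinearEquiv.ker_comp b.symm N.mkQ).trans N.ker_mkQ).symm

theorem IsTorsionClass.mem_of_submodule_of_quotient {T : Set (Mdl Λ)} (hT : IsTorsionClass Λ T)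
    {X : Mdl Λ} (N : Submodule Λ X.carrier) (hN : Mdl.of Λ N ∈ T)
    (hQ : Mdl.of Λ (X.carrier ⧸ N) ∈ T) : X ∈ T :=
  hT.ext_closed _ hN _ hQ X (extOf_iff_exists_submodule.mpr
    ⟨N, ⟨LinearEquiv.refl _ _⟩, ⟨LinearEquiv.refl _ _⟩⟩)

namespace Filt

variable {S : Set (Mdl Λ)} {X : Mdl Λ}

theorem of_mem (hX : X ∈ S) : Filt Λ S X :=
  step X ⊥ X hX (of_subsingleton _ (inferInstanceAs (Subsingleton (⊥ : Submodule Λ X.carrier))))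
    ⟨Submodule.quotEquivOfEqBot ⊥ rfl⟩

theorem of_mIso (hX : Filt Λ S X) {Y : Mdl Λ} (hXY : MIso Λ X Y) : Filt Λ S Y := by
  induction hX generalizing Y with
  | of_subsingleton X h =>
    obtain ⟨e⟩ := hXY
    exact of_subsingleton Y e.symm.toEquiv.subsingleton
  | step X N Z hZ _ hNZ ih =>
    obtain ⟨e⟩ := hXY
    obtain ⟨q⟩ := hNZ
    exact step Y (N.map e.toLinearMap) Z hZ (ih ⟨e.submoduleMap N⟩)
      ⟨(Submodule.Quotient.equiv N _ e rfl).symm.trans q⟩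

theorem of_surjective_of_ker {B : Mdl Λ} (hB : Filt Λ S B) {X : Mdl Λ}
    (g : X.carrier →ₗ[Λ] B.carrier) (hg : Function.Surjective g)
    (hker : Filt Λ S (Mdl.of Λ (LinearMap.ker g))) : Filt Λ S X := by
  induction hB generalizing X with
  | of_subsingleton B _ =>
    have hker_top : LinearMap.ker g = ⊤ := Subsingleton.elim g 0 ▸ LinearMap.ker_zero
    exact hker.of_mIso ⟨LinearEquiv.ofTop _ hker_top⟩
  | step B N Z hZ _ hNZ ih =>
    obtain ⟨q⟩ := hNZ
    let g' : N.comap g →ₗ[Λ] N := g.restrict fun _ hx => hx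
    have hg' : Function.Surjective g' := by
      rintro ⟨b, hb⟩
      obtain ⟨x, rfl⟩ := hg b
      exact ⟨⟨x, hb⟩, rfl⟩
    have hker' : LinearMap.ker g' = (LinearMap.ker g).comap (N.comap g).subtype :=
      LinearMap.ker_restrict _
    have kerEquiv : LinearMap.ker g ≃ₗ[Λ] LinearMap.ker g' :=
      (LinearEquiv.ofEq _ _ hker' ≪≫ₗ
        Submodule.comapSubtypeEquivOfLe (LinearMap.ker_le_comap g)).symm
    have hker_mkQ : N.comap g = LinearMap.ker (N.mkQ.comp g) := by
      rw [LinearMap.ker_comp, Submodule.ker_mkQ]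
    have quotEquiv : (X.carrier ⧸ N.comap g) ≃ₗ[Λ] B.carrier ⧸ N :=
      Submodule.quotEquivOfEq _ _ hker_mkQ ≪≫ₗ
        LinearMap.quotKerEquivOfSurjective _ (N.mkQ_surjective.comp hg)
    exact step X (N.comap g) Z hZ
      (ih (X := Mdl.of Λ (N.comap g)) g' hg' (hker.of_mIso ⟨kerEquiv⟩)) ⟨quotEquiv ≪≫ₗ q⟩

theorem of_submodule_of_quotient (N : Submodule Λ X.carrier) (hN : Filt Λ S (Mdl.of Λ N))
    (hQ : Filt Λ S (Mdl.of Λ (X.carrier ⧸ N))) : Filt Λ S X :=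
  hQ.of_surjective_of_ker N.mkQ N.mkQ_surjective (hN.of_mIso ⟨LinearEquiv.ofEq _ _ N.ker_mkQ.symm⟩)

theorem of_extOf {A B : Mdl Λ} (hA : Filt Λ S A) (hB : Filt Λ S B) (hX : ExtOf Λ X A B) :
    Filt Λ S X := by
  obtain ⟨N, hAN, hBQ⟩ := extOf_iff_exists_submodule.mp hX
  exact of_submodule_of_quotient N (hA.of_mIso hAN) (hB.of_mIso hBQ)

theorem of_isFactor (hS : ∀ Z ∈ S, ∀ W : Mdl Λ, IsFactor Λ Z W → Filt Λ S W)
    (hX : Filt Λ S X) {Y : Mdl Λ} (hXY : IsFactor Λ X Y) : Filt Λ S Y := by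
  induction hX generalizing Y with
  | of_subsingleton X _ =>
    obtain ⟨f, hf⟩ := hXY
    exact of_subsingleton Y hf.subsingleton
  | step X N Z hZ _ hNZ ih =>
    obtain ⟨f, hf⟩ := hXY
    obtain ⟨q⟩ := hNZ
    let fQ : (X.carrier ⧸ N) →ₗ[Λ] Y.carrier ⧸ N.map f :=
      N.mapQ (N.map f) f (Submodule.le_comap_map f N)
    have hfQ : Function.Surjective fQ :=
      Function.Surjective.of_comp (g := N.mkQ) ((N.map f).mkQ_surjective.comp hf)
    exact of_submodule_of_quotient (N.map f)
      (ih ⟨f.submoduleMap N, f.submoduleMap_surjective N⟩)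
      (hS Z hZ _ ⟨fQ.comp q.symm.toLinearMap, hfQ.comp q.symm.surjective⟩)

theorem finite (hS : ∀ Z ∈ S, Module.Finite Λ Z.carrier) (hX : Filt Λ S X) :
    Module.Finite Λ X.carrier := by
  induction hX with
  | of_subsingleton X _ => infer_instance
  | step X N Z hZ _ hNZ ih =>
    obtain ⟨q⟩ := hNZ
    have := hS Z hZ
    have : Module.Finite Λ (X.carrier ⧸ N) := Module.Finite.equiv q.symm
    have : Module.Finite Λ N := ih
    exact Module.Finite.of_submodule_quotient N

theorem eq_zero_or_surjective {M : Mdl Λ}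
    (hS : ∀ Z ∈ S, ∀ f : Z.carrier →ₗ[Λ] M.carrier, f = 0 ∨ Function.Surjective f)
    (hX : Filt Λ S X) (f : X.carrier →ₗ[Λ] M.carrier) : f = 0 ∨ Function.Surjective f := by
  induction hX with
  | of_subsingleton X _ => exact Or.inl (Subsingleton.elim f 0)
  | step X N Z hZ _ hNZ ih =>
    obtain ⟨q⟩ := hNZ
    rcases ih (f.comp N.subtype) with hfN | hfN
    · obtain ⟨g, rfl⟩ := exists_comp_mkQ_eq_of_comp_subtype_eq_zero hfN
      rcases hS Z hZ (g.comp q.symm.toLinearMap) with hg | hg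
      · have hg_zero : g = 0 := (LinearMap.cancel_right q.symm.surjective).mp hg
        exact Or.inl (by rw [hg_zero, LinearMap.zero_comp])
      · have hg_surj : Function.Surjective g := Function.Surjective.of_comp hg
        exact Or.inr (hg_surj.comp N.mkQ_surjective)
    · exact Or.inr (Function.Surjective.of_comp hfN)

end Filt

theorem subset_filtSet (S : Set (Mdl Λ)) : S ⊆ FiltSet Λ S :=
  fun _ => Filt.of_mem

theorem isTorsionClass_filtSet {S : Set (Mdl Λ)} (hfin : ∀ Z ∈ S, Module.Finite Λ Z.carrier)
    (hfac : ∀ Z ∈ S, ∀ W : Mdl Λ, IsFactor Λ Z W → W ∈ FiltSet Λ S) :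
    IsTorsionClass Λ (FiltSet Λ S) where
  fin _ hX := Filt.finite hfin hX
  zero_mem := Filt.of_subsingleton
  iso_closed _ hX _ := Filt.of_mIso hX
  factor_closed _ hX _ := Filt.of_isFactor hfac hX
  ext_closed _ hA _ hB _ := Filt.of_extOf hA hB

/-- The left Hom-perpendicular class `⊥M` of the modules admitting no nonzero map to `M`. It is not
restricted to finitely generated modules, so it is intersected with torsion classes. -/
def LeftPerp (M : Mdl Λ) : Set (Mdl Λ) :=
  {X | ∀ f : X.carrier →ₗ[Λ] M.carrier, f = 0}

theorem mem_leftPerp_of_isFactor {M X Y : Mdl Λ} (hX : X ∈ LeftPerp M) (hXY : IsFactor Λ X Y) :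
    Y ∈ LeftPerp M := by
  obtain ⟨p, hp⟩ := hXY
  exact fun f => (LinearMap.cancel_right hp).mp (hX (f.comp p))

theorem mem_leftPerp_of_extOf {M X A B : Mdl Λ} (hA : A ∈ LeftPerp M) (hB : B ∈ LeftPerp M)
    (hX : ExtOf Λ X A B) : X ∈ LeftPerp M := by
  intro f
  obtain ⟨N, hAN, hBQ⟩ := extOf_iff_exists_submodule.mp hX
  have hfN : f.comp N.subtype = 0 := mem_leftPerp_of_isFactor hA hAN.isFactor _
  obtain ⟨g, rfl⟩ := exists_comp_mkQ_eq_of_comp_subtype_eq_zero hfN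
  have hg : g = 0 := mem_leftPerp_of_isFactor hB hBQ.isFactor g
  rw [hg, LinearMap.zero_comp]

theorem subsingleton_of_mem_leftPerp_self {M : Mdl Λ} (hM : M ∈ LeftPerp M) :
    Subsingleton M.carrier := by
  have hid : ∀ x : M.carrier, x = 0 := LinearMap.congr_fun (hM LinearMap.id)
  exact ⟨fun x y => (hid x).trans (hid y).symm⟩

namespace IsTorsionClass

variable {T : Set (Mdl Λ)} {M : Mdl Λ}

theorem filtSet_subset (hT : IsTorsionClass Λ T) {S : Set (Mdl Λ)} (hS : S ⊆ T) :
    FiltSet Λ S ⊆ T := by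
  intro X hX
  induction hX with
  | of_subsingleton X h => exact hT.zero_mem X h
  | step X N Z hZ _ hNZ ih =>
    obtain ⟨q⟩ := hNZ
    exact hT.mem_of_submodule_of_quotient N ih (hT.iso_closed Z (hS hZ) _ ⟨q.symm⟩)

theorem inter_leftPerp (hT : IsTorsionClass Λ T) (M : Mdl Λ) :
    IsTorsionClass Λ (T ∩ LeftPerp M) where
  fin X hX := hT.fin X hX.1
  zero_mem X h := ⟨hT.zero_mem X h, fun f => Subsingleton.elim f 0⟩
  iso_closed X hX Y hXY :=
    ⟨hT.iso_closed X hX.1 Y hXY, mem_leftPerp_of_isFactor hX.2 hXY.isFactor⟩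
  factor_closed X hX Y hXY :=
    ⟨hT.factor_closed X hX.1 Y hXY, mem_leftPerp_of_isFactor hX.2 hXY⟩
  ext_closed A hA B hB X hX :=
    ⟨hT.ext_closed A hA.1 B hB.1 X hX, mem_leftPerp_of_extOf hA.2 hB.2 hX⟩

theorem filtSet_insert (hT : IsTorsionClass Λ T) (hMfin : Module.Finite Λ M.carrier)
    (hMfac : ∀ N : Mdl Λ, IsProperFactor Λ M N → N ∈ T) :
    IsTorsionClass Λ (FiltSet Λ (insert M T)) := by
  refine isTorsionClass_filtSet (Set.forall_mem_insert.mpr ⟨hMfin, hT.fin⟩) ?_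
  rintro Z (rfl | hZ) W ⟨p, hp⟩
  · by_cases hinj : Function.Injective p
    · exact (Filt.of_mem (Set.mem_insert Z T)).of_mIso ⟨LinearEquiv.ofBijective p ⟨hinj, hp⟩⟩
    · exact Filt.of_mem (Set.mem_insert_of_mem Z (hMfac W ⟨p, hp, hinj⟩))
  · exact Filt.of_mem (Set.mem_insert_of_mem M (hT.factor_closed Z hZ W ⟨p, hp⟩))

theorem subset_leftPerp (hT : IsTorsionClass Λ T) (hM : M ∉ T)
    (hMfac : ∀ N : Mdl Λ, IsProperFactor Λ M N → N ∈ T) : T ⊆ LeftPerp M := by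
  intro N hN f
  by_contra hf
  have hrange : Mdl.of Λ (LinearMap.range f) ∈ T :=
    hT.factor_closed N hN _ ⟨f.rangeRestrict, f.surjective_rangeRestrict⟩
  have hcoker : Mdl.of Λ (M.carrier ⧸ LinearMap.range f) ∈ T := by
    refine hMfac _ ⟨(LinearMap.range f).mkQ, Submodule.mkQ_surjective _, fun hinj => hf ?_⟩
    exact LinearMap.range_eq_bot.mp
      ((Submodule.ker_mkQ _).symm.trans (LinearMap.ker_eq_bot.mpr hinj))
  exact hM (hT.mem_of_submodule_of_quotient _ hrange hcoker)

theorem end_eq_zero_of_not_injective (hT : IsTorsionClass Λ T) (hM : M ∉ T)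
    (hMfac : ∀ N : Mdl Λ, IsProperFactor Λ M N → N ∈ T)
    {f : M.carrier →ₗ[Λ] M.carrier} (hf : ¬ Function.Injective f) : f = 0 := by
  have hrange : Mdl.of Λ (LinearMap.range f) ∈ T :=
    hMfac _ ⟨f.rangeRestrict, f.surjective_rangeRestrict,
      fun h => hf (f.injective_rangeRestrict_iff.mp h)⟩
  have hincl : (LinearMap.range f).subtype = 0 := hT.subset_leftPerp hM hMfac hrange _
  calc f = (LinearMap.range f).subtype.comp f.rangeRestrict := rfl
    _ = 0 := by rw [hincl, LinearMap.zero_comp]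

theorem isFactor_or_mem_leftPerp (hT : IsTorsionClass Λ T) (hM : M ∉ T)
    (hMfac : ∀ N : Mdl Λ, IsProperFactor Λ M N → N ∈ T)
    (hMinj : ∀ f : M.carrier →ₗ[Λ] M.carrier, Function.Injective f → Function.Surjective f)
    {N : Mdl Λ} (hN : N ∈ FiltSet Λ (insert M T)) : IsFactor Λ N M ∨ N ∈ LeftPerp M := by
  have hinsert : ∀ Z ∈ insert M T, ∀ f : Z.carrier →ₗ[Λ] M.carrier,
      f = 0 ∨ Function.Surjective f := by
    rintro Z (rfl | hZ) f
    · by_cases hf : Function.Injective f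
      · exact Or.inr (hMinj f hf)
      · exact Or.inl (hT.end_eq_zero_of_not_injective hM hMfac hf)
    · exact Or.inl (hT.subset_leftPerp hM hMfac hZ f)
  by_cases hNM : IsFactor Λ N M
  · exact Or.inl hNM
  · exact Or.inr fun f => (Filt.eq_zero_or_surjective hinsert hN f).resolve_right
      fun hf => hNM ⟨f, hf⟩

end IsTorsionClass

theorem statement8_general {T : Set (Mdl Λ)} (hT : IsTorsionClass Λ T) {M : Mdl Λ}
    (hMfin : Module.Finite Λ M.carrier)
    (hMinj : ∀ f : M.carrier →ₗ[Λ] M.carrier, Function.Injective f → Function.Surjective f)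
    (hM : M ∉ T) (hMfac : ∀ N : Mdl Λ, IsProperFactor Λ M N → N ∈ T) :
    TorsCovers Λ (FiltSet Λ (insert M T)) T ↔
      ∀ N ∈ FiltSet Λ (insert M T), N ∉ T → IsFactor Λ N M := by
  have hT' := hT.filtSet_insert hMfin hMfac
  obtain ⟨hMT', hTT'⟩ := Set.insert_subset_iff.mp (subset_filtSet (insert M T))
  constructor
  · rintro ⟨-, -, -, hcover⟩ N hN hNT
    refine (hT.isFactor_or_mem_leftPerp hM hMfac hMinj hN).resolve_right fun hNperp => ?_
    have hTY : T ⊂ FiltSet Λ (insert M T) ∩ LeftPerp M :=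
      ⟨Set.subset_inter hTT' (hT.subset_leftPerp hM hMfac), fun h => hNT (h ⟨hN, hNperp⟩)⟩
    have hYT' := hcover _ (hT'.inter_leftPerp M) hTY Set.inter_subset_left
    have hMperp : M ∈ LeftPerp M := Set.inter_eq_left.mp hYT' hMT'
    exact hM (hT.zero_mem M (subsingleton_of_mem_leftPerp_self hMperp))
  · refine fun h => ⟨hT', hT, ⟨hTT', fun hT'T => hM (hT'T hMT')⟩, fun Y hY hTY hYT' => ?_⟩
    obtain ⟨N, hNY, hNT⟩ := Set.exists_of_ssubset hTY
    have hMY : M ∈ Y := hY.factor_closed N hNY M (h N (hYT' hNY) hNT)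
    exact hYT'.antisymm (hY.filtSet_subset (Set.insert_subset hMY hTY.1))

end

/-- Let `T` be a torsion class and `M` an indecomposable module not in
`T` whose proper factors all lie in `T`, and set `T' = Filt(T ∪ {M})`.  Then `T'` covers
`T` in `tors Λ` if and only if `M` is a factor module of every `N ∈ T' \ T`. -/
theorem statement8 (k : Type) [Field k] (Λ : Type) [Ring Λ] [Algebra k Λ]
    [FiniteDimensional k Λ] (T : Set (Mdl Λ)) (hT : IsTorsionClass Λ T)
    (M : Mdl Λ) (hMfin : Module.Finite Λ M.carrier) (hMindec : Indec Λ M)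
    (hMnotmem : M ∉ T) (hMfac : ∀ N : Mdl Λ, IsProperFactor Λ M N → N ∈ T) :
    TorsCovers Λ (FiltSet Λ (insert M T)) T ↔
      ∀ N ∈ FiltSet Λ (insert M T), N ∉ T → IsFactor Λ N M := by
  have : IsArtinianRing Λ := IsArtinianRing.of_finite k Λ
  exact statement8_general hT hMfin IsArtinian.surjective_of_injective_endomorphism hMnotmem hMfac
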